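/- arXiv:1008.3317 — 5 statements merged into one kernel-verified Lean document; each statement's English description precedes it below -/
import Mathlib

section
/- For all integers B ≥ 0, m ≥ 0 and every real μ with 0 < μ < 1, the generalized binomial probabilities sum to one: Σ_{j=0}^{2B+2m} p_j(2B, μ, m) = 1. -/
/-!
Put `N = 2B + 2m` and `G_j(t) = (1 + (1 - μ) t)^j (1 - μ t)^(N - j)`. The `m`-th coefficient of
`G_j` is `P_m^{(j-m, N-m-j)}(1 - 2μ)`, a multiple of the Krawtchouk polynomial of degree `m` at `j`.
The binomial theorem evaluates the binomial average of `G_j(t) G_j(u)` as `(1 + μ (1 - μ) t u)^N`;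
comparing coefficients of `t^m u^m` gives the squared norm `C(N, m) (μ (1 - μ))^m` of that
polynomial under the binomial distribution, and `p_j` is the weighted square divided by this norm.
-/

open Finset

/-- The Jacobi polynomial `P_m^{(α,β)}(x)` for integer parameters `α, β`
(with `m+α ≥ 0` and `m+β ≥ 0` in the intended range), defined by
`P_m^{(α,β)}(x) = ∑_{s=0}^{m} C(m+α, m−s) C(m+β, s) ((x−1)/2)^s ((x+1)/2)^{m−s}`. -/
noncomputable def jacobiP (m : ℕ) (α β : ℤ) (x : ℝ) : ℝ :=
  ∑ s ∈ Finset.range (m + 1),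
    (((m + α).toNat.choose (m - s) : ℝ)) * (((m + β).toNat.choose s : ℝ)) *
      ((x - 1) / 2) ^ s * ((x + 1) / 2) ^ (m - s)

/-- The generalized binomial probability
`p_j(2B, μ, m) = (m!(2B+m)!)/(j!(2B+2m−j)!) μ^{j−m} (1−μ)^{2B+m−j} (P_m^{(j−m,2B+m−j)}(1−2μ))²`,
where the powers of `μ` and `1−μ` are integer (possibly negative) powers. -/
noncomputable def genBinomP (B m : ℕ) (μ : ℝ) (j : ℕ) : ℝ :=
  ((m.factorial * (2 * B + m).factorial : ℕ) : ℝ)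
      / ((j.factorial * (2 * B + 2 * m - j).factorial : ℕ) : ℝ)
    * μ ^ ((j : ℤ) - (m : ℤ)) * (1 - μ) ^ ((2 * B + m : ℤ) - (j : ℤ))
    * (jacobiP m ((j : ℤ) - (m : ℤ)) ((2 * B + m : ℤ) - (j : ℤ)) (1 - 2 * μ)) ^ 2

section Krawtchouk

open Polynomial

variable {R : Type*} [CommRing R]

theorem coeff_one_add_C_mul_X_pow {S : Type*} [CommSemiring S] (a : S) (n k : ℕ) :
    ((1 + C a * X : S[X]) ^ n).coeff k = n.choose k * a ^ k := by
  have hcomp : (1 + C a * X : S[X]) ^ n = ((1 + X : S[X]) ^ n).comp (C a * X) := by simp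
  rw [hcomp, comp_C_mul_X_coeff, coeff_one_add_X_pow]

/-- The generating polynomial of the Krawtchouk polynomials with weights `p` and `q`: up to
normalization, its `m`-th coefficient is the Krawtchouk polynomial of degree `m` on `{0, …, a + b}`,
evaluated at `a`. The weights are not required to add up to `1`. -/
noncomputable def krawtchoukGen (p q : R) (a b : ℕ) : R[X] :=
  (1 + C q * X) ^ a * (1 - C p * X) ^ b

theorem coeff_krawtchoukGen (p q : R) (a b m : ℕ) :
    (krawtchoukGen p q a b).coeff m =
      ∑ s ∈ range (m + 1), a.choose (m - s) * b.choose s * (-p) ^ s * q ^ (m - s) := by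
  have hp : (1 - C p * X : R[X]) = 1 + C (-p) * X := by rw [C_neg, neg_mul, sub_eq_add_neg]
  rw [krawtchoukGen, mul_comm, coeff_mul, Nat.sum_antidiagonal_eq_sum_range_succ_mk]
  refine sum_congr rfl fun s _ => ?_
  rw [hp, coeff_one_add_C_mul_X_pow, coeff_one_add_C_mul_X_pow]
  ring

-- In `R[X][X]` the two independent variables `t` and `u` are `C X` and `X`.
theorem sum_choose_mul_krawtchoukGen_mul_krawtchoukGen (p q : R) (N : ℕ) :
    ∑ j ∈ range (N + 1), C (C (N.choose j * p ^ j * q ^ (N - j))) *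
        (C (krawtchoukGen p q j (N - j)) * (krawtchoukGen p q j (N - j)).map C) =
      C (C ((p + q) ^ N)) * (1 + C (C (p * q) * X) * X : R[X][X]) ^ N := by
  have hsplit : C (C (p + q)) * (1 + C (C (p * q) * X) * X : R[X][X]) =
      C (C p) * (1 + C (C q * X)) * (1 + C (C q) * X) +
        C (C q) * (1 - C (C p * X)) * (1 - C (C p) * X) := by
    simp only [map_mul, map_add]
    ring
  rw [C_pow, C_pow, ← mul_pow, hsplit, add_pow]
  refine sum_congr rfl fun j _ => ?_
  simp only [krawtchoukGen, Polynomial.map_mul, Polynomial.map_pow, Polynomial.map_add,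
    Polynomial.map_sub, Polynomial.map_one, map_C, map_X, map_mul, map_pow, map_add, map_sub,
    map_one, map_natCast, mul_pow]
  ring

theorem sum_choose_mul_coeff_krawtchoukGen_mul_coeff (p q : R) (N m n : ℕ) :
    ∑ j ∈ range (N + 1), N.choose j * p ^ j * q ^ (N - j) *
        ((krawtchoukGen p q j (N - j)).coeff m * (krawtchoukGen p q j (N - j)).coeff n) =
      if m = n then (p + q) ^ N * (N.choose n * (p * q) ^ n) else 0 := by
  have hcoeff := congrArg (fun P : R[X][X] => (P.coeff n).coeff m)
    (sum_choose_mul_krawtchoukGen_mul_krawtchoukGen p q N)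
  simp only [finsetSum_coeff, coeff_C_mul, coeff_map, coeff_mul_C, coeff_one_add_C_mul_X_pow,
    mul_pow, ← C_pow, ← C_eq_natCast, coeff_X_pow] at hcoeff
  rw [hcoeff, mul_pow]
  split_ifs <;> simp

end Krawtchouk

theorem jacobiP_eq_coeff_krawtchoukGen (m a b : ℕ) (x : ℝ) :
    jacobiP m ((a : ℤ) - m) ((b : ℤ) - m) x =
      (krawtchoukGen ((1 - x) / 2) ((1 + x) / 2) a b).coeff m := by
  rw [coeff_krawtchoukGen, jacobiP, add_sub_cancel, add_sub_cancel, Int.toNat_natCast,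
    Int.toNat_natCast, ← neg_div, neg_sub, add_comm x]

theorem cast_choose_div_cast_choose (K : Type*) [Semifield K] [CharZero K] {N j m : ℕ}
    (hj : j ≤ N) (hm : m ≤ N) :
    (N.choose j / N.choose m : K) =
      ((m.factorial * (N - m).factorial : ℕ) : K) /
        ((j.factorial * (N - j).factorial : ℕ) : K) := by
  have hN : (N.factorial : K) ≠ 0 := Nat.cast_ne_zero.mpr N.factorial_ne_zero
  rw [Nat.cast_choose K hj, Nat.cast_choose K hm, div_div_div_cancel_left' _ _ hN,
    Nat.cast_mul, Nat.cast_mul]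

theorem genBinomP_eq_div {B m j : ℕ} {μ : ℝ} (h0 : μ ≠ 0) (h1 : μ ≠ 1)
    (hj : j ≤ 2 * B + 2 * m) :
    genBinomP B m μ j =
      ((2 * B + 2 * m).choose j * μ ^ j * (1 - μ) ^ (2 * B + 2 * m - j) *
          (krawtchoukGen μ (1 - μ) j (2 * B + 2 * m - j)).coeff m ^ 2) /
        ((2 * B + 2 * m).choose m * (μ * (1 - μ)) ^ m) := by
  have hexp : (2 * B + m : ℤ) - j = ((2 * B + 2 * m - j : ℕ) : ℤ) - m := by lia
  have hsub : 2 * B + m = 2 * B + 2 * m - m := by lia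
  have hp : (1 - (1 - 2 * μ)) / 2 = μ := by ring
  have hq : (1 + (1 - 2 * μ)) / 2 = 1 - μ := by ring
  rw [genBinomP, hexp, jacobiP_eq_coeff_krawtchoukGen, hp, hq, hsub,
    ← cast_choose_div_cast_choose ℝ hj (by lia), zpow_sub₀ h0,
    zpow_sub₀ (sub_ne_zero.mpr h1.symm)]
  simp only [zpow_natCast, div_eq_mul_inv, mul_pow, mul_inv]
  ring

theorem genBinomP_sum_eq_one_general (B m : ℕ) (μ : ℝ) (h0 : μ ≠ 0) (h1 : μ ≠ 1) :
    ∑ j ∈ range (2 * B + 2 * m + 1), genBinomP B m μ j = 1 := by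
  have hnorm : ((2 * B + 2 * m).choose m * (μ * (1 - μ)) ^ m : ℝ) ≠ 0 :=
    mul_ne_zero (Nat.cast_ne_zero.mpr (Nat.choose_pos (by lia)).ne')
      (pow_ne_zero m (mul_ne_zero h0 (sub_ne_zero.mpr h1.symm)))
  calc ∑ j ∈ range (2 * B + 2 * m + 1), genBinomP B m μ j
    _ = (∑ j ∈ range (2 * B + 2 * m + 1),
          (2 * B + 2 * m).choose j * μ ^ j * (1 - μ) ^ (2 * B + 2 * m - j) *
            (krawtchoukGen μ (1 - μ) j (2 * B + 2 * m - j)).coeff m ^ 2) /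
          ((2 * B + 2 * m).choose m * (μ * (1 - μ)) ^ m) := by
      rw [sum_div]
      exact sum_congr rfl fun j hj => genBinomP_eq_div h0 h1 (mem_range_succ_iff.mp hj)
    _ = 1 := by
      simp only [sq, sum_choose_mul_coeff_krawtchoukGen_mul_coeff, if_true, add_sub_cancel,
        one_pow, one_mul, div_self hnorm]

/-- The generalized binomial probabilities sum to one. -/
theorem genBinomP_sum_eq_one (B m : ℕ) (μ : ℝ) (h0 : 0 < μ) (h1 : μ < 1) :
    ∑ j ∈ Finset.range (2 * B + 2 * m + 1), genBinomP B m μ j = 1 :=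
  genBinomP_sum_eq_one_general B m μ h0.ne' h1.ne
end

section
/- For all integers B ≥ 0, m ≥ 0, every real μ with 0 < μ < 1, and every real t, the characteristic function of the generalized binomial distribution satisfies Σ_{j=0}^{2B+2m} e^{ijt}·p_j(2B, μ, m) = e^{imt}·((1−μ) + μ·e^{it})^{2B}·P_m^{(0,2B)}(1 − 4μ(1−μ)(1 − cos t)). -/
open Finset

/-!
Put `n = 2B + 2m`. The Jacobi value in `p_j` is the coefficient of `X ^ m` in
`(1 + (1 - μ) X) ^ j * (1 - μ X) ^ (n - j)`, so its square is the coefficient of `X ^ m Y ^ m` in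
the product of this polynomial with its copy in `Y`. Weighted by
`C(n, j) (μ w) ^ j (1 - μ) ^ (n - j)` and summed over `j`, these products form the `n`-th power of a
single symmetric bilinear form `a + b (X + Y) + d X Y`. Extracting the same coefficient from that
power directly gives `C(n, m) a ^ (2B)` times a Jacobi sum in `b ^ 2` and `a d`, and for
`w = e ^ (it)` both of these are `μ (1 - μ) w` times a real number.
-/

section JacobiForm

open Polynomial

variable {R : Type*} [CommSemiring R]

/-- The Jacobi polynomial as a binary form: `P_m^{(α,β)}(x)` is the value at `u = (x - 1) / 2`,
`v = (x + 1) / 2`, with the parameters encoded by the natural numbers `p = m + α`, `q = m + β`. -/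
def jacobiForm (m p q : ℕ) (u v : R) : R :=
  ∑ s ∈ range (m + 1), p.choose (m - s) * q.choose s * u ^ s * v ^ (m - s)

theorem map_jacobiForm {S : Type*} [CommSemiring S] (f : R →+* S) (m p q : ℕ) (u v : R) :
    f (jacobiForm m p q u v) = jacobiForm m p q (f u) (f v) := by
  simp [jacobiForm]

theorem jacobiForm_mul_mul (m p q : ℕ) (c u v : R) :
    jacobiForm m p q (c * u) (c * v) = c ^ m * jacobiForm m p q u v := by
  rw [jacobiForm, jacobiForm, mul_sum]
  refine sum_congr rfl fun s hs => ?_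
  obtain ⟨r, rfl⟩ := Nat.exists_eq_add_of_le (mem_range_succ_iff.1 hs)
  rw [Nat.add_sub_cancel_left]
  ring

theorem coeff_C_add_C_mul_X_pow (a b : R) (n k : ℕ) :
    ((C a + C b * X) ^ n).coeff k = n.choose k * a ^ (n - k) * b ^ k := by
  have hcomp : (C a + C b * X) ^ n = ((X + C a) ^ n).comp (C b * X) := by
    simp [add_comm]
  rw [hcomp, comp_C_mul_X_coeff, coeff_X_add_C_pow, mul_comm (a ^ _)]

theorem coeff_linear_pow_mul_linear_pow (a b c d : R) (p q m : ℕ) :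
    ((C a + C b * X) ^ q * (C c + C d * X) ^ p).coeff m
      = ∑ s ∈ range (m + 1), (q.choose s * a ^ (q - s) * b ^ s)
          * (p.choose (m - s) * c ^ (p - (m - s)) * d ^ (m - s)) := by
  simp only [coeff_mul, Nat.sum_antidiagonal_eq_sum_range_succ_mk, coeff_C_add_C_mul_X_pow]

theorem jacobiForm_eq_coeff (m p q : ℕ) (u v : R) :
    jacobiForm m p q u v = ((1 + C v * X) ^ p * (1 + C u * X) ^ q).coeff m := by
  rw [mul_comm, ← C_1, coeff_linear_pow_mul_linear_pow, jacobiForm]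
  refine sum_congr rfl fun s _ => ?_
  simp only [one_pow]
  ring

theorem coeff_linear_pow_add_mul_linear_pow (a b c d : R) (N m : ℕ) :
    ((C a + C b * X) ^ (N + m) * (C c + C d * X) ^ m).coeff m
      = a ^ N * jacobiForm m m (N + m) (b * c) (a * d) := by
  rw [coeff_linear_pow_mul_linear_pow, jacobiForm, mul_sum]
  refine sum_congr rfl fun s hs => ?_
  have hsm : s ≤ m := mem_range_succ_iff.1 hs
  rw [Nat.sub_sub_self hsm, Nat.add_sub_assoc hsm]
  ring

-- `R[X][X]` encodes polynomials in `X` (inner variable) and `Y` (outer variable), so that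
-- `C f * g.map C` is `f(X) g(Y)`.
theorem coeff_coeff_C_mul_map_C (f g : R[X]) (k l : ℕ) :
    ((C f * g.map C).coeff l).coeff k = f.coeff k * g.coeff l := by
  rw [coeff_C_mul, coeff_map, coeff_mul_C]

theorem coeff_coeff_C_mul_map_C_add_pow (f₁ g₁ f₂ g₂ : R[X]) (n k l : ℕ) :
    (((C f₁ * g₁.map C + C f₂ * g₂.map C) ^ n).coeff l).coeff k
      = ∑ j ∈ range (n + 1), n.choose j
          * ((f₁ ^ j * f₂ ^ (n - j)).coeff k * (g₁ ^ j * g₂ ^ (n - j)).coeff l) := by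
  rw [add_pow, finsetSum_coeff, finsetSum_coeff]
  refine sum_congr rfl fun j _ => ?_
  have hterm : (C f₁ * g₁.map C) ^ j * (C f₂ * g₂.map C) ^ (n - j) * (n.choose j : R[X][X])
      = C (C (n.choose j : R) * (f₁ ^ j * f₂ ^ (n - j))) * (g₁ ^ j * g₂ ^ (n - j)).map C := by
    simp only [Polynomial.map_mul, Polynomial.map_pow, map_mul, map_pow, map_natCast]
    ring
  rw [hterm, coeff_coeff_C_mul_map_C, coeff_C_mul, mul_assoc]

theorem coeff_coeff_bilinear_pow (a b c d : R) (N m : ℕ) :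
    (((C (C a + C b * X) + C (C c + C d * X) * X) ^ (N + 2 * m)).coeff m).coeff m
      = (N + 2 * m).choose m * (a ^ N * jacobiForm m m (N + m) (b * c) (a * d)) := by
  rw [coeff_C_add_C_mul_X_pow, show N + 2 * m - m = N + m by lia, mul_assoc,
    ← map_natCast (C : R →+* R[X]), coeff_C_mul, coeff_linear_pow_add_mul_linear_pow]

theorem sum_choose_mul_jacobiForm_sq (x y u v : R) (N m : ℕ) :
    ∑ j ∈ range (N + 2 * m + 1), (N + 2 * m).choose j * x ^ j * y ^ (N + 2 * m - j)
        * jacobiForm m j (N + 2 * m - j) u v ^ 2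
      = (N + 2 * m).choose m * ((x + y) ^ N
          * jacobiForm m m (N + m) ((x * v + y * u) ^ 2)
              ((x + y) * (x * v ^ 2 + y * u ^ 2))) := by
  set f : R[X] := 1 + C v * X with hf
  set g : R[X] := 1 + C u * X with hg
  have hform : C (C x * f) * f.map C + C (C y * g) * g.map C
      = C (C (x + y) + C (x * v + y * u) * X)
        + C (C (x * v + y * u) + C (x * v ^ 2 + y * u ^ 2) * X) * X := by
    simp only [hf, hg, Polynomial.map_add, Polynomial.map_mul, Polynomial.map_one, map_C, map_X,
      map_add, map_mul, map_pow, map_one]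
    ring
  rw [sq (x * v + y * u), ← coeff_coeff_bilinear_pow, ← hform, coeff_coeff_C_mul_map_C_add_pow]
  refine sum_congr rfl fun j _ => ?_
  have hweight : (C x * f) ^ j * (C y * g) ^ (N + 2 * m - j)
      = C (x ^ j * y ^ (N + 2 * m - j)) * (f ^ j * g ^ (N + 2 * m - j)) := by
    simp only [map_mul, map_pow, mul_pow]
    ring
  rw [hweight, coeff_C_mul, hf, hg, ← jacobiForm_eq_coeff]
  ring

end JacobiForm

@[norm_cast]
theorem ofReal_jacobiForm (m p q : ℕ) (u v : ℝ) :
    ((jacobiForm m p q u v : ℝ) : ℂ) = jacobiForm m p q (u : ℂ) (v : ℂ) :=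
  map_jacobiForm Complex.ofRealHom m p q u v

theorem jacobiP_one_sub_two_mul {m p q : ℕ} {α β : ℤ} (hp : m + α = p) (hq : m + β = q) (y : ℝ) :
    jacobiP m α β (1 - 2 * y) = jacobiForm m p q (-y) (1 - y) := by
  rw [jacobiP, jacobiForm, hp, hq, Int.toNat_natCast, Int.toNat_natCast,
    show (1 - 2 * y - 1) / 2 = -y by ring, show (1 - 2 * y + 1) / 2 = 1 - y by ring]

theorem factorial_mul_factorial_div_mul_choose {K : Type*} [Field K] [CharZero K] {n j m : ℕ}
    (hj : j ≤ n) (hm : m ≤ n) :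
    ((m.factorial * (n - m).factorial : ℕ) : K) / ((j.factorial * (n - j).factorial : ℕ) : K)
      * n.choose m = n.choose j := by
  rw [div_mul_eq_mul_div, div_eq_iff (Nat.cast_ne_zero.2 (by positivity))]
  norm_cast
  rw [mul_comm, ← mul_assoc, ← mul_assoc, Nat.choose_mul_factorial_mul_factorial hm,
    Nat.choose_mul_factorial_mul_factorial hj]

theorem genBinomP_mul_choose {μ : ℝ} (hμ₀ : μ ≠ 0) (hμ₁ : μ ≠ 1) {B m j : ℕ}
    (hj : j ≤ 2 * B + 2 * m) :
    genBinomP B m μ j * ((2 * B + 2 * m).choose m * (μ * (1 - μ)) ^ m)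
      = (2 * B + 2 * m).choose j * μ ^ j * (1 - μ) ^ (2 * B + 2 * m - j)
        * jacobiForm m j (2 * B + 2 * m - j) (-μ) (1 - μ) ^ 2 := by
  have hpow : μ ^ ((j : ℤ) - m) * μ ^ m = μ ^ j := by
    rw [← zpow_natCast, ← zpow_natCast, ← zpow_add₀ hμ₀, sub_add_cancel]
  have hpow' : (1 - μ) ^ ((2 * B + m : ℤ) - j) * (1 - μ) ^ m = (1 - μ) ^ (2 * B + 2 * m - j) := by
    rw [← zpow_natCast, ← zpow_natCast, ← zpow_add₀ (sub_ne_zero.2 hμ₁.symm)]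
    congr 1
    lia
  have hfact := factorial_mul_factorial_div_mul_choose (K := ℝ) hj (show m ≤ 2 * B + 2 * m by lia)
  rw [show 2 * B + 2 * m - m = 2 * B + m by lia] at hfact
  rw [genBinomP, jacobiP_one_sub_two_mul (p := j) (q := 2 * B + 2 * m - j) (by lia) (by lia),
    ← hfact, ← hpow, ← hpow', mul_pow]
  ring

theorem sum_pow_mul_genBinomP {μ : ℝ} (hμ₀ : μ ≠ 0) (hμ₁ : μ ≠ 1) (B m : ℕ) (w : ℂ) :
    ∑ j ∈ range (2 * B + 2 * m + 1), w ^ j * (genBinomP B m μ j : ℂ)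
      = (1 - μ + μ * w) ^ (2 * B) * jacobiForm m m (2 * B + m) (μ * (1 - μ) * (w - 1) ^ 2)
          ((1 - μ + μ * w) * (μ + (1 - μ) * w)) := by
  set n := 2 * B + 2 * m
  have hK : n.choose m * ((μ : ℂ) * (1 - μ)) ^ m ≠ 0 := by
    have hchoose : n.choose m ≠ 0 := (Nat.choose_pos (by lia)).ne'
    exact_mod_cast mul_ne_zero (Nat.cast_ne_zero.2 hchoose)
      (pow_ne_zero m (mul_ne_zero hμ₀ (sub_ne_zero.2 hμ₁.symm)))
  have hterm : ∀ j ∈ range (n + 1),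
      w ^ j * genBinomP B m μ j * (n.choose m * ((μ : ℂ) * (1 - μ)) ^ m)
        = n.choose j * (μ * w) ^ j * (1 - μ) ^ (n - j)
          * jacobiForm m j (n - j) (-μ : ℂ) (1 - μ) ^ 2 := fun j hj => by
    have h := congrArg Complex.ofReal (genBinomP_mul_choose hμ₀ hμ₁ (mem_range_succ_iff.1 hj))
    push_cast at h
    rw [mul_assoc, h]
    ring
  have hu : (μ * w * (1 - μ) + (1 - μ) * -μ) ^ 2
      = μ * (1 - μ) * (μ * (1 - μ) * (w - 1) ^ 2) := by ring
  have hv : (μ * w + (1 - μ)) * (μ * w * (1 - μ) ^ 2 + (1 - μ) * (-μ) ^ 2)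
      = μ * (1 - μ) * ((1 - μ + μ * w) * (μ + (1 - μ) * w)) := by ring
  refine mul_right_cancel₀ hK ?_
  rw [sum_mul, sum_congr rfl hterm, sum_choose_mul_jacobiForm_sq, hu, hv, jacobiForm_mul_mul]
  ring

theorem two_mul_cos_mul_exp (z : ℂ) :
    2 * Complex.cos z * Complex.exp (Complex.I * z) = Complex.exp (Complex.I * z) ^ 2 + 1 := by
  rw [mul_comm Complex.I, Complex.two_cos, add_mul, neg_mul, Complex.exp_neg,
    inv_mul_cancel₀ (Complex.exp_ne_zero _), sq]

theorem genBinomP_charFun_general (B m : ℕ) {μ : ℝ} (hμ₀ : μ ≠ 0) (hμ₁ : μ ≠ 1) (z : ℂ) :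
    ∑ j ∈ range (2 * B + 2 * m + 1),
        Complex.exp (Complex.I * j * z) * (genBinomP B m μ j : ℂ)
      = Complex.exp (Complex.I * m * z) * (1 - μ + μ * Complex.exp (Complex.I * z)) ^ (2 * B)
        * jacobiForm m m (2 * B + m) (-(2 * μ * (1 - μ) * (1 - Complex.cos z)))
            (1 - 2 * μ * (1 - μ) * (1 - Complex.cos z)) := by
  have hexp (k : ℕ) : Complex.exp (Complex.I * k * z) = Complex.exp (Complex.I * z) ^ k := by
    rw [← Complex.exp_nat_mul, mul_left_comm, mul_assoc]
  have hcos := two_mul_cos_mul_exp z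
  simp only [hexp]
  set w := Complex.exp (Complex.I * z)
  have hu : μ * (1 - μ) * (w - 1) ^ 2 = w * -(2 * μ * (1 - μ) * (1 - Complex.cos z)) := by
    linear_combination (-(μ * (1 - μ)) : ℂ) * hcos
  have hv : (1 - μ + μ * w) * (μ + (1 - μ) * w)
      = w * (1 - 2 * μ * (1 - μ) * (1 - Complex.cos z)) := by
    linear_combination (-(μ * (1 - μ)) : ℂ) * hcos
  rw [sum_pow_mul_genBinomP hμ₀ hμ₁, hu, hv, jacobiForm_mul_mul]
  ring

/-- The characteristic function of the generalized binomial distribution: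
`∑_{j=0}^{2B+2m} e^{ijt} p_j(2B,μ,m) = e^{imt} ((1−μ)+μe^{it})^{2B} P_m^{(0,2B)}(1−4μ(1−μ)(1−cos t))`. -/
theorem genBinomP_charFun (B m : ℕ) (μ : ℝ) (h0 : 0 < μ) (h1 : μ < 1) (t : ℝ) :
    ∑ j ∈ Finset.range (2 * B + 2 * m + 1),
        Complex.exp (Complex.I * (j : ℂ) * (t : ℂ)) * (genBinomP B m μ j : ℂ)
      = Complex.exp (Complex.I * (m : ℂ) * (t : ℂ))
        * (((1 : ℂ) - (μ : ℂ)) + (μ : ℂ) * Complex.exp (Complex.I * (t : ℂ))) ^ (2 * B)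
        * ((jacobiP m 0 (2 * B) (1 - 4 * μ * (1 - μ) * (1 - Real.cos t)) : ℝ) : ℂ) := by
  rw [show 4 * μ * (1 - μ) * (1 - Real.cos t) = 2 * (2 * μ * (1 - μ) * (1 - Real.cos t)) by ring,
    jacobiP_one_sub_two_mul (p := m) (q := 2 * B + m) (by lia) (by lia)]
  exact_mod_cast genBinomP_charFun_general B m h0.ne' h1.ne t
end

section
/- For all integers B ≥ 0, m ≥ 0 with B + m ≥ 1 and every real μ with 0 < μ < 1, the Mandel parameter Q(μ) = V(μ)/E(μ) − 1 of the generalized binomial distribution, where E(μ) = Σ_{j=0}^{2B+2m} j·p_j(2B, μ, m) and V(μ) = Σ_{j=0}^{2B+2m} j²·p_j(2B, μ, m) − E(μ)², satisfies Q(μ) = −T_m(μ)/(2Bμ + m), where T_m(μ) = 2(B + m(2B+m+1))·μ² − 2m(2B+m+1)·μ + m. -/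
open Finset

/-- The mean `E(μ) = ∑_{j=0}^{2B+2m} j p_j(2B,μ,m)` of the generalized binomial distribution. -/
noncomputable def genBinomMean (B m : ℕ) (μ : ℝ) : ℝ :=
  ∑ j ∈ Finset.range (2 * B + 2 * m + 1), (j : ℝ) * genBinomP B m μ j

/-- The variance `V(μ) = ∑_{j=0}^{2B+2m} j² p_j(2B,μ,m) − E(μ)²`. -/
noncomputable def genBinomVar (B m : ℕ) (μ : ℝ) : ℝ :=
  (∑ j ∈ Finset.range (2 * B + 2 * m + 1), (j : ℝ) ^ 2 * genBinomP B m μ j)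
    - (genBinomMean B m μ) ^ 2

/-- The Mandel parameter `Q(μ) = V(μ)/E(μ) − 1`. -/
noncomputable def mandelQ (B m : ℕ) (μ : ℝ) : ℝ :=
  genBinomVar B m μ / genBinomMean B m μ - 1

/-! The probability `p_j(2B, μ, m)` is the binomial weight of `j` among `N = 2B + 2m` trials times
the square of the `m`-th Krawtchouk polynomial at `j`, normalised. The monic Krawtchouk polynomials
`K_n` are orthogonal for the binomial weight and satisfy a three-term recurrence
`x K_n = K_{n+1} + b_n K_n + a_n K_{n-1}`, so under `K_m²` the variable `x` has mean `b_m` and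
variance `a_m + a_{m+1}`. Both orthogonality and the recurrence are read off the generating
function `(1 - μX)^(N-j) (1 + (1-μ)X)^j`. -/

open Polynomial

/-- `K` is an orthogonal family for the linear functional `L`, on which multiplication by `x` acts
by a three-term recurrence in the normalisation of monic orthogonal polynomials: the coefficient of
`K (n + 1)` is `1`. At `n = 0` the truncated index `n - 1` is harmless because `a 0 = 0`. -/
structure IsThreeTermOrthogonal {R A : Type*} [CommSemiring R] [CommSemiring A] [Algebra R A]
    (L : A →ₗ[R] R) (x : A) (K : ℕ → A) (a b : ℕ → R) : Prop where
  coeff_zero : a 0 = 0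
  mul_eq (n : ℕ) : x * K n = K (n + 1) + b n • K n + a n • K (n - 1)
  orthogonal {m n : ℕ} : m ≠ n → L (K m * K n) = 0

namespace IsThreeTermOrthogonal

variable {R A : Type*} [CommSemiring R] [CommSemiring A] [Algebra R A] {L : A →ₗ[R] R} {x : A}
  {K : ℕ → A} {a b : ℕ → R}

theorem apply_mul_mul (hK : IsThreeTermOrthogonal L x K a b) (n : ℕ) (y : A) :
    L (x * K n * y) = L (K (n + 1) * y) + b n * L (K n * y) + a n * L (K (n - 1) * y) := by
  rw [hK.mul_eq, add_mul, add_mul, smul_mul_assoc, smul_mul_assoc]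
  simp only [map_add, map_smul, smul_eq_mul]

theorem apply_mul_mul_succ (hK : IsThreeTermOrthogonal L x K a b) (n : ℕ) :
    L (x * K n * K (n + 1)) = L (K (n + 1) ^ 2) := by
  rw [hK.apply_mul_mul, hK.orthogonal (show n ≠ n + 1 by lia),
    hK.orthogonal (show n - 1 ≠ n + 1 by lia), sq]
  simp only [mul_zero, add_zero]

theorem apply_sq_succ (hK : IsThreeTermOrthogonal L x K a b) (n : ℕ) :
    L (K (n + 1) ^ 2) = a (n + 1) * L (K n ^ 2) := by
  rw [← hK.apply_mul_mul_succ, mul_right_comm, hK.apply_mul_mul,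
    hK.orthogonal (show n + 1 + 1 ≠ n by lia), hK.orthogonal (show n + 1 ≠ n by lia),
    Nat.add_sub_cancel, sq]
  simp only [mul_zero, zero_add]

theorem apply_mul_sq (hK : IsThreeTermOrthogonal L x K a b) (n : ℕ) :
    L (x * K n ^ 2) = b n * L (K n ^ 2) := by
  have hlower : a n * L (K (n - 1) * K n) = 0 := by
    cases n with
    | zero => rw [hK.coeff_zero, zero_mul]
    | succ n => rw [hK.orthogonal (by lia), mul_zero]
  rw [sq, ← mul_assoc, hK.apply_mul_mul, hK.orthogonal (Nat.succ_ne_self n), hlower, zero_add,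
    add_zero]

theorem apply_sq_mul_sq (hK : IsThreeTermOrthogonal L x K a b) (n : ℕ) :
    L (x ^ 2 * K n ^ 2) = (b n ^ 2 + a n + a (n + 1)) * L (K n ^ 2) := by
  have hupper : L (K (n + 1) * (x * K n)) = a (n + 1) * L (K n ^ 2) := by
    rw [mul_comm, hK.apply_mul_mul_succ, hK.apply_sq_succ]
  have hdiag : L (K n * (x * K n)) = b n * L (K n ^ 2) := by
    rw [← hK.apply_mul_sq, sq, mul_left_comm]
  have hlower : a n * L (K (n - 1) * (x * K n)) = a n * L (K n ^ 2) := by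
    cases n with
    | zero => rw [hK.coeff_zero, zero_mul, zero_mul]
    | succ n => rw [Nat.add_sub_cancel, ← hK.apply_mul_mul_succ, ← mul_assoc, mul_comm (K n)]
  calc L (x ^ 2 * K n ^ 2) = L (x * K n * (x * K n)) := by rw [← mul_pow, sq]
    _ = a (n + 1) * L (K n ^ 2) + b n * (b n * L (K n ^ 2)) + a n * L (K n ^ 2) := by
      rw [hK.apply_mul_mul, hupper, hdiag, hlower]
    _ = (b n ^ 2 + a n + a (n + 1)) * L (K n ^ 2) := by ring

end IsThreeTermOrthogonal

namespace GenBinom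

section CommSemiring

variable {R : Type*} [CommSemiring R]

theorem coeff_one_add_C_mul_X_pow (r : R) (n i : ℕ) :
    ((1 + C r * X) ^ n).coeff i = n.choose i * r ^ i := by
  have h : (1 + C r * X) ^ n = ((1 + X : R[X]) ^ n).comp (C r * X) := by simp
  rw [h, comp_C_mul_X_coeff, coeff_one_add_X_pow]

theorem mul_derivative_pow (p : R[X]) (n : ℕ) :
    p * derivative (p ^ n) = n * derivative p * p ^ n := by
  cases n with
  | zero => simp
  | succ n =>
    rw [derivative_pow, C_eq_natCast, Nat.add_sub_cancel]
    ring

theorem coeff_X_mul_derivative (p : R[X]) (n : ℕ) :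
    (X * derivative p).coeff n = n * p.coeff n := by
  cases n with
  | zero => simp
  | succ n => rw [coeff_X_mul, coeff_derivative, Nat.cast_succ, mul_comm]

end CommSemiring

variable {R : Type*} [CommRing R]

/-- The generating function `∑ n, K_n(j) X^n / n!` of the monic Krawtchouk polynomials `K_n` for
`j + k` trials with success probability `μ`, at `j` successes and `k` failures. -/
noncomputable def krawtchoukGen (μ : R) (j k : ℕ) : R[X] :=
  (1 + C (1 - μ) * X) ^ j * (1 - C μ * X) ^ k

/-- The monic Krawtchouk polynomial of degree `n` for `N` trials with success probability `μ`, as a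
function on its nodes `0, …, N`. -/
noncomputable def krawtchouk (N : ℕ) (μ : R) (n : ℕ) : Fin (N + 1) → R :=
  fun j => n.factorial * (krawtchoukGen μ j (N - j)).coeff n

/-- The weight of `j` in the binomial distribution of `N` trials with success probability `μ`. -/
def binomialWeight (N : ℕ) (μ : R) (j : ℕ) : R :=
  N.choose j * μ ^ j * (1 - μ) ^ (N - j)

/-- The expectation of functions on `0, …, N` under the binomial distribution. -/
def binomialExpectation (N : ℕ) (μ : R) : (Fin (N + 1) → R) →ₗ[R] R :=
  ∑ j : Fin (N + 1), binomialWeight N μ j • LinearMap.proj j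

theorem binomialExpectation_apply (N : ℕ) (μ : R) (f : Fin (N + 1) → R) :
    binomialExpectation N μ f = ∑ j : Fin (N + 1), binomialWeight N μ j * f j := by
  simp [binomialExpectation]

theorem mul_derivative_krawtchoukGen (μ : R) (j k : ℕ) :
    (1 + C (1 - μ) * X) * (1 - C μ * X) * derivative (krawtchoukGen μ j k)
      = (C (j - (j + k) * μ) - C ((j + k) * (μ * (1 - μ))) * X) * krawtchoukGen μ j k := by
  have hsucc := mul_derivative_pow (1 + C (1 - μ) * X) j
  have hfail := mul_derivative_pow (1 - C μ * X) k
  rw [krawtchoukGen, derivative_mul]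
  simp only [derivative_add, derivative_one, derivative_C_mul_X, zero_add] at hsucc
  simp only [derivative_sub, derivative_one, derivative_C_mul_X, zero_sub] at hfail
  simp only [map_mul, map_sub, map_add, map_one, map_natCast] at hsucc hfail ⊢
  linear_combination (1 - C μ * X) * (1 - C μ * X) ^ k * hsucc
    + (1 + (1 - C μ) * X) * (1 + (1 - C μ) * X) ^ j * hfail

theorem mul_krawtchoukGen (μ : R) (j k : ℕ) :
    C (j : R) * krawtchoukGen μ j k
      = derivative (krawtchoukGen μ j k) + C (1 - 2 * μ) * (X * derivative (krawtchoukGen μ j k))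
        - C (μ * (1 - μ)) * (X * (X * derivative (krawtchoukGen μ j k)))
        + C ((j + k) * μ) * krawtchoukGen μ j k
        + C ((j + k) * (μ * (1 - μ))) * (X * krawtchoukGen μ j k) := by
  have h := mul_derivative_krawtchoukGen μ j k
  simp only [map_mul, map_sub, map_add, map_one, map_natCast, map_ofNat] at h ⊢
  linear_combination -h

theorem mul_krawtchouk (N : ℕ) (μ : R) (n : ℕ) :
    (fun j : Fin (N + 1) => (j : R)) * krawtchouk N μ n
      = krawtchouk N μ (n + 1) + (N * μ + n * (1 - 2 * μ)) • krawtchouk N μ n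
        + (n * (N - n + 1) * (μ * (1 - μ))) • krawtchouk N μ (n - 1) := by
  ext j
  have hN : (j : R) + (N - j : ℕ) = N := by
    rw [← Nat.cast_add, Nat.add_sub_cancel' (Nat.le_of_lt_succ j.isLt)]
  have h := congrArg (coeff · n) (mul_krawtchoukGen μ j (N - j))
  simp only [Pi.mul_apply, Pi.add_apply, Pi.smul_apply, smul_eq_mul, krawtchouk]
  cases n with
  | zero =>
    simp only [hN, coeff_add, coeff_sub, coeff_C_mul, coeff_X_mul_zero, coeff_derivative] at h
    simp only [Nat.factorial_zero, Nat.factorial_one, Nat.cast_zero, Nat.cast_one, zero_add] at h ⊢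
    linear_combination h
  | succ n =>
    simp only [hN, coeff_add, coeff_sub, coeff_C_mul, coeff_X_mul, coeff_X_mul_derivative,
      coeff_derivative] at h
    simp only [Nat.factorial_succ, Nat.add_sub_cancel]
    push_cast at h ⊢
    linear_combination (n + 1) * (n.factorial : R) * h

theorem sum_binomialWeight_mul_krawtchoukGen (N : ℕ) (μ : R) :
    ∑ j : Fin (N + 1), C (C (binomialWeight N μ j)) *
        ((krawtchoukGen μ j (N - j)).map C * C (krawtchoukGen μ j (N - j)))
      = (1 + C (C (μ * (1 - μ)) * X) * X) ^ N := by
  have h : (1 + C (C (μ * (1 - μ)) * X) * X : R[X][X])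
      = C (C μ) * ((1 + C (C (1 - μ)) * X) * (1 + C (C (1 - μ) * X)))
        + C (C (1 - μ)) * ((1 - C (C μ) * X) * (1 - C (C μ * X))) := by
    simp only [map_mul, map_sub, map_one]
    ring
  rw [h, add_pow, Finset.sum_range]
  refine Finset.sum_congr rfl fun j _ => ?_
  simp only [binomialWeight, krawtchoukGen, Polynomial.map_mul, Polynomial.map_pow,
    Polynomial.map_add, Polynomial.map_sub, Polynomial.map_one, map_C, map_X, map_mul, map_pow,
    map_add, map_sub, map_one, map_natCast, mul_pow]
  ring

theorem sum_binomialWeight_mul_coeff_krawtchoukGen (N : ℕ) (μ : R) (m n : ℕ) :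
    ∑ j : Fin (N + 1), binomialWeight N μ j *
        ((krawtchoukGen μ j (N - j)).coeff m * (krawtchoukGen μ j (N - j)).coeff n)
      = if m = n then N.choose n * (μ * (1 - μ)) ^ n else 0 := by
  have h := congrArg (fun p => (p.coeff m).coeff n) (sum_binomialWeight_mul_krawtchoukGen N μ)
  simp only [finsetSum_coeff, coeff_C_mul, coeff_mul_C, coeff_map, coeff_one_add_C_mul_X_pow] at h
  rw [h, mul_pow, ← C_pow, ← C_eq_natCast, coeff_C_mul, coeff_C_mul, coeff_X_pow]
  obtain rfl | hmn := eq_or_ne m n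
  · simp
  · simp [hmn, hmn.symm]

theorem binomialExpectation_krawtchouk_mul (N : ℕ) (μ : R) (m n : ℕ) :
    binomialExpectation N μ (krawtchouk N μ m * krawtchouk N μ n)
      = if m = n then n.factorial ^ 2 * N.choose n * (μ * (1 - μ)) ^ n else 0 := by
  calc binomialExpectation N μ (krawtchouk N μ m * krawtchouk N μ n)
      = m.factorial * n.factorial * ∑ j : Fin (N + 1), binomialWeight N μ j *
          ((krawtchoukGen μ j (N - j)).coeff m * (krawtchoukGen μ j (N - j)).coeff n) := by
        rw [binomialExpectation_apply, Finset.mul_sum]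
        refine Finset.sum_congr rfl fun j _ => ?_
        simp only [Pi.mul_apply, krawtchouk]
        ring
    _ = if m = n then n.factorial ^ 2 * N.choose n * (μ * (1 - μ)) ^ n else 0 := by
        rw [sum_binomialWeight_mul_coeff_krawtchoukGen]
        split_ifs with hmn
        · rw [hmn]
          ring
        · rw [mul_zero]

theorem binomialExpectation_krawtchouk_sq (N : ℕ) (μ : R) (n : ℕ) :
    binomialExpectation N μ (krawtchouk N μ n ^ 2)
      = n.factorial ^ 2 * N.choose n * (μ * (1 - μ)) ^ n := by
  rw [sq, binomialExpectation_krawtchouk_mul, if_pos rfl]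

theorem binomialExpectation_krawtchouk_sq_ne_zero {N n : ℕ} (hn : n ≤ N) {μ : ℝ} (h0 : μ ≠ 0)
    (h1 : μ ≠ 1) : binomialExpectation N μ (krawtchouk N μ n ^ 2) ≠ 0 := by
  have hchoose : (N.choose n : ℝ) ≠ 0 := mod_cast (Nat.choose_pos hn).ne'
  rw [binomialExpectation_krawtchouk_sq]
  exact mul_ne_zero (mul_ne_zero (by positivity) hchoose)
    (pow_ne_zero n (mul_ne_zero h0 (sub_ne_zero.mpr h1.symm)))

theorem isThreeTermOrthogonal_krawtchouk (N : ℕ) (μ : R) :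
    IsThreeTermOrthogonal (binomialExpectation N μ) (fun j => (j : R)) (krawtchouk N μ)
      (fun n => n * (N - n + 1) * (μ * (1 - μ))) (fun n => N * μ + n * (1 - 2 * μ)) where
  coeff_zero := by simp
  mul_eq := mul_krawtchouk N μ
  orthogonal hmn := by rw [binomialExpectation_krawtchouk_mul, if_neg hmn]

theorem jacobiP_eq_coeff (m j k : ℕ) (x : ℝ) :
    jacobiP m (j - m) (k - m) x
      = ((1 + C ((x + 1) / 2) * X) ^ j * (1 + C ((x - 1) / 2) * X) ^ k).coeff m := by
  rw [mul_comm, coeff_mul, Finset.Nat.sum_antidiagonal_eq_sum_range_succ_mk, jacobiP]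
  refine Finset.sum_congr rfl fun s _ => ?_
  rw [add_sub_cancel, add_sub_cancel, Int.toNat_natCast, Int.toNat_natCast,
    coeff_one_add_C_mul_X_pow, coeff_one_add_C_mul_X_pow]
  ring

theorem jacobiP_eq_coeff_krawtchoukGen (m j k : ℕ) (μ : ℝ) :
    jacobiP m (j - m) (k - m) (1 - 2 * μ) = (krawtchoukGen μ j k).coeff m := by
  rw [jacobiP_eq_coeff, krawtchoukGen, show (1 - 2 * μ + 1) / 2 = 1 - μ by ring,
    show (1 - 2 * μ - 1) / 2 = -μ by ring, C_neg, neg_mul, ← sub_eq_add_neg]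

section Moments

variable (B m : ℕ) {μ : ℝ}

theorem genBinomP_mul_binomialExpectation (h0 : μ ≠ 0) (h1 : μ ≠ 1)
    (j : Fin (2 * B + 2 * m + 1)) :
    genBinomP B m μ j
        * binomialExpectation (2 * B + 2 * m) μ (krawtchouk (2 * B + 2 * m) μ m ^ 2)
      = binomialWeight (2 * B + 2 * m) μ j * krawtchouk (2 * B + 2 * m) μ m j ^ 2 := by
  obtain ⟨j, hj⟩ := j
  obtain ⟨k, hk⟩ := Nat.exists_eq_add_of_le (Nat.le_of_lt_succ hj)
  have hq : 1 - μ ≠ 0 := sub_ne_zero.mpr h1.symm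
  have hexp : (2 * B + m : ℤ) - j = k - m := by lia
  have hkj : 2 * B + 2 * m - j = k := by lia
  rw [binomialExpectation_krawtchouk_sq, genBinomP, binomialWeight, krawtchouk, hexp,
    jacobiP_eq_coeff_krawtchoukGen, hkj, zpow_sub₀ h0, zpow_sub₀ hq,
    Nat.cast_choose ℝ (show m ≤ 2 * B + 2 * m by lia),
    Nat.cast_choose ℝ (Nat.le_of_lt_succ hj), hkj, show 2 * B + 2 * m - m = 2 * B + m by lia]
  simp only [zpow_natCast, Nat.cast_mul, mul_pow]
  field_simp

theorem sum_mul_genBinomP (h0 : μ ≠ 0) (h1 : μ ≠ 1) (f : Fin (2 * B + 2 * m + 1) → ℝ) :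
    ∑ j, f j * genBinomP B m μ j
      = binomialExpectation (2 * B + 2 * m) μ (f * krawtchouk (2 * B + 2 * m) μ m ^ 2)
        / binomialExpectation (2 * B + 2 * m) μ (krawtchouk (2 * B + 2 * m) μ m ^ 2) := by
  rw [eq_div_iff (binomialExpectation_krawtchouk_sq_ne_zero (by lia) h0 h1), Finset.sum_mul,
    binomialExpectation_apply _ _ (f * _)]
  refine Finset.sum_congr rfl fun j _ => ?_
  rw [mul_assoc, genBinomP_mul_binomialExpectation B m h0 h1, Pi.mul_apply, Pi.pow_apply,
    mul_left_comm]

theorem genBinomMean_eq (h0 : μ ≠ 0) (h1 : μ ≠ 1) : genBinomMean B m μ = 2 * B * μ + m := by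
  rw [genBinomMean, Finset.sum_range, sum_mul_genBinomP B m h0 h1 fun j => (j : ℝ),
    (isThreeTermOrthogonal_krawtchouk _ μ).apply_mul_sq,
    mul_div_cancel_right₀ _ (binomialExpectation_krawtchouk_sq_ne_zero (by lia) h0 h1)]
  push_cast
  ring

theorem genBinomVar_eq (h0 : μ ≠ 0) (h1 : μ ≠ 1) :
    genBinomVar B m μ = 2 * (B + m * (2 * B + m + 1)) * (μ * (1 - μ)) := by
  have hsq := sum_mul_genBinomP B m h0 h1 ((fun j : Fin _ => (j : ℝ)) ^ 2)
  simp only [Pi.pow_apply] at hsq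
  rw [genBinomVar, genBinomMean_eq B m h0 h1, Finset.sum_range, hsq,
    (isThreeTermOrthogonal_krawtchouk _ μ).apply_sq_mul_sq,
    mul_div_cancel_right₀ _ (binomialExpectation_krawtchouk_sq_ne_zero (by lia) h0 h1)]
  push_cast
  ring

end Moments

theorem genBinomMean_pos {B m : ℕ} (hBm : 1 ≤ B + m) {μ : ℝ} (h0 : 0 < μ) (h1 : μ < 1) :
    0 < genBinomMean B m μ := by
  rw [genBinomMean_eq B m h0.ne' h1.ne]
  obtain hB | hm : 0 < B ∨ 0 < m := by lia
  all_goals positivity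

end GenBinom

theorem mandelQ_eq_general (B m : ℕ) {μ : ℝ} (h0 : μ ≠ 0) (h1 : μ ≠ 1)
    (hmean : genBinomMean B m μ ≠ 0) :
    mandelQ B m μ
      = -(2 * ((B : ℝ) + m * (2 * B + m + 1)) * μ ^ 2 - 2 * m * (2 * B + m + 1) * μ + m)
          / (2 * B * μ + m) := by
  rw [mandelQ, div_sub_one hmean, GenBinom.genBinomVar_eq B m h0 h1,
    GenBinom.genBinomMean_eq B m h0 h1]
  ring

/-- The Mandel parameter of the generalized binomial distribution equals
`−T_m(μ)/(2Bμ+m)` with `T_m(μ) = 2(B+m(2B+m+1))μ² − 2m(2B+m+1)μ + m`. -/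
theorem mandelQ_eq (B m : ℕ) (hBm : 1 ≤ B + m) (μ : ℝ) (h0 : 0 < μ) (h1 : μ < 1) :
    mandelQ B m μ
      = -(2 * ((B : ℝ) + m * (2 * B + m + 1)) * μ ^ 2 - 2 * m * (2 * B + m + 1) * μ + m)
          / (2 * B * μ + m) :=
  mandelQ_eq_general B m h0.ne' h1.ne (GenBinom.genBinomMean_pos hBm h0 h1).ne'
end

section
/- Let B ≥ 0 and m ≥ 1 be integers, set c = 2B+m+1 and T_m(μ) = 2(B + mc)·μ² − 2mc·μ + m. Then 1 − 2(B + mc)/(mc²) ≥ 0, and the two real numbers μ^± = (mc/(2(B + mc)))·(1 ± (1 − 2(B + mc)/(mc²))^{1/2}) satisfy T_m(μ^+) = 0 and T_m(μ^−) = 0, and 0 < μ^− ≤ μ^+ < 1. -/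
/-!
Write `A = B + mc`. Completing the square at the vertex `mc/(2A)` of `T_m` gives
`T_m((mc/(2A))(1 + t)) = ((mc)²/(2A))(t² - D)` with `D = 1 - 2A/(mc²)`, so the roots correspond to
`t = ±√D`. Here `D ≥ 0` amounts to `2B ≤ mc(c - 2)`, which holds because `mc ≥ 1` and `c - 2 ≥ 2B`.
Since `√D < 1`, both roots are positive, and `mc ≤ A` puts `(mc/(2A))(1 + √D)` below `1`.
-/

section Field

variable {K : Type*} [Field K]

/-- The polynomial `T_m(μ)`, the numerator of minus the Mandel parameter. The leading coefficient
`A` stands for `B + mc`, and `c` is left free. -/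
def mandelQuadratic (A m c μ : K) : K :=
  2 * A * μ ^ 2 - 2 * m * c * μ + m

/-- The discriminant of `T_m` divided by `(2mc)²`: the quantity under the square root in `μ^±`. -/
def mandelDiscrim (A m c : K) : K :=
  1 - 2 * A / (m * c ^ 2)

theorem mandelQuadratic_vertex_mul_one_add {A m c : K} (hA : 2 * A ≠ 0) (hm : m ≠ 0) (hc : c ≠ 0)
    (t : K) :
    mandelQuadratic A m c (m * c / (2 * A) * (1 + t)) =
      (m * c) ^ 2 / (2 * A) * (t ^ 2 - mandelDiscrim A m c) := by
  obtain ⟨h_two, hA'⟩ := mul_ne_zero_iff.mp hA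
  unfold mandelQuadratic mandelDiscrim
  field_simp
  ring

end Field

section OrderedField

variable {K : Type*} [Field K] [LinearOrder K] [IsStrictOrderedRing K] {A B m c : K}

theorem mandelDiscrim_nonneg_iff (hm : 0 < m) (hc : c ≠ 0) :
    0 ≤ mandelDiscrim A m c ↔ 2 * A ≤ m * c ^ 2 := by
  rw [mandelDiscrim, sub_nonneg, div_le_one (by positivity)]

theorem mandelDiscrim_lt_one (hA : 0 < A) (hm : 0 < m) (hc : c ≠ 0) : mandelDiscrim A m c < 1 :=
  sub_lt_self _ (by positivity)

theorem two_mul_add_mul_le_mul_sq (hB : 0 ≤ B) (hmc : 1 ≤ m * c) (hc : 2 * B + 2 ≤ c) :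
    2 * (B + m * c) ≤ m * c ^ 2 := by
  have h_disc : 2 * B ≤ m * c * (c - 2) :=
    calc 2 * B ≤ c - 2 := le_sub_right_of_add_le hc
      _ ≤ m * c * (c - 2) := le_mul_of_one_le_left (by linarith) hmc
  linarith

end OrderedField

section Real

variable {A B m c : ℝ}

/-- The larger root `μ⁺` of `T_m`. -/
noncomputable def mandelRootPlus (A m c : ℝ) : ℝ :=
  m * c / (2 * A) * (1 + √(mandelDiscrim A m c))

/-- The smaller root `μ⁻` of `T_m`. -/
noncomputable def mandelRootMinus (A m c : ℝ) : ℝ :=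
  m * c / (2 * A) * (1 - √(mandelDiscrim A m c))

theorem mandelQuadratic_mandelRootPlus (hA : A ≠ 0) (hm : m ≠ 0) (hc : c ≠ 0)
    (hD : 0 ≤ mandelDiscrim A m c) : mandelQuadratic A m c (mandelRootPlus A m c) = 0 := by
  rw [mandelRootPlus, mandelQuadratic_vertex_mul_one_add (mul_ne_zero two_ne_zero hA) hm hc,
    Real.sq_sqrt hD, sub_self, mul_zero]

theorem mandelQuadratic_mandelRootMinus (hA : A ≠ 0) (hm : m ≠ 0) (hc : c ≠ 0)
    (hD : 0 ≤ mandelDiscrim A m c) : mandelQuadratic A m c (mandelRootMinus A m c) = 0 := by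
  rw [mandelRootMinus, sub_eq_add_neg,
    mandelQuadratic_vertex_mul_one_add (mul_ne_zero two_ne_zero hA) hm hc, neg_sq,
    Real.sq_sqrt hD, sub_self, mul_zero]

theorem sqrt_mandelDiscrim_lt_one (hA : 0 < A) (hm : 0 < m) (hc : c ≠ 0) :
    √(mandelDiscrim A m c) < 1 := by
  rw [Real.sqrt_lt' one_pos, one_pow]
  exact mandelDiscrim_lt_one hA hm hc

theorem mandelRootMinus_pos (hA : 0 < A) (hm : 0 < m) (hc : 0 < c) : 0 < mandelRootMinus A m c :=
  mul_pos (by positivity) (sub_pos.mpr (sqrt_mandelDiscrim_lt_one hA hm hc.ne'))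

theorem mandelRootMinus_le_mandelRootPlus (hA : 0 ≤ A) (hmc : 0 ≤ m * c) :
    mandelRootMinus A m c ≤ mandelRootPlus A m c := by
  have h_sqrt : 0 ≤ √(mandelDiscrim A m c) := Real.sqrt_nonneg _
  unfold mandelRootMinus mandelRootPlus
  gcongr
  linarith

theorem mandelRootPlus_lt_one (hm : 0 < m) (hc : 0 < c) (hA : m * c ≤ A) :
    mandelRootPlus A m c < 1 := by
  have hmc : 0 < m * c := mul_pos hm hc
  have hA_pos : 0 < A := hmc.trans_le hA
  rw [mandelRootPlus, div_mul_eq_mul_div, div_lt_one (by positivity)]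
  calc m * c * (1 + √(mandelDiscrim A m c)) < m * c * (1 + 1) := by
        gcongr
        exact sqrt_mandelDiscrim_lt_one hA_pos hm hc.ne'
    _ ≤ 2 * A := by linarith

theorem mandel_quadratic_roots_general (hB : 0 ≤ B) (hmc : 1 ≤ m * c) (hc : 2 * B + 2 ≤ c) :
    0 ≤ mandelDiscrim (B + m * c) m c
    ∧ mandelQuadratic (B + m * c) m c (mandelRootPlus (B + m * c) m c) = 0
    ∧ mandelQuadratic (B + m * c) m c (mandelRootMinus (B + m * c) m c) = 0
    ∧ 0 < mandelRootMinus (B + m * c) m c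
    ∧ mandelRootMinus (B + m * c) m c ≤ mandelRootPlus (B + m * c) m c
    ∧ mandelRootPlus (B + m * c) m c < 1 := by
  have hc_pos : 0 < c := by linarith
  have hmc_pos : 0 < m * c := one_pos.trans_le hmc
  have hm_pos : 0 < m := pos_of_mul_pos_left hmc_pos hc_pos.le
  have hA_pos : 0 < B + m * c := by positivity
  have hD : 0 ≤ mandelDiscrim (B + m * c) m c :=
    (mandelDiscrim_nonneg_iff hm_pos hc_pos.ne').mpr (two_mul_add_mul_le_mul_sq hB hmc hc)
  exact ⟨hD,
    mandelQuadratic_mandelRootPlus hA_pos.ne' hm_pos.ne' hc_pos.ne' hD,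
    mandelQuadratic_mandelRootMinus hA_pos.ne' hm_pos.ne' hc_pos.ne' hD,
    mandelRootMinus_pos hA_pos hm_pos hc_pos,
    mandelRootMinus_le_mandelRootPlus hA_pos.le hmc_pos.le,
    mandelRootPlus_lt_one hm_pos hc_pos (le_add_of_nonneg_left hB)⟩

end Real

/-- Roots of the quadratic `T_m(μ) = 2(B+mc)μ² − 2mcμ + m` (with `c = 2B+m+1`), the numerator of
minus the Mandel parameter of the generalized binomial distribution `B(2B,μ,m)`: the discriminant
expression `1 − 2(B+mc)/(mc²)` is nonnegative, the two numbers
`μ^± = (mc/(2(B+mc)))(1 ± √(1 − 2(B+mc)/(mc²)))` are roots of `T_m`, and `0 < μ⁻ ≤ μ⁺ < 1`. -/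
theorem mandel_quadratic_roots (B m : ℕ) (hm : 1 ≤ m) :
    (0 : ℝ) ≤ 1 - 2 * ((B : ℝ) + m * (2 * B + m + 1)) / (m * (2 * B + m + 1 : ℝ) ^ 2)
    ∧ (2 * ((B : ℝ) + m * (2 * B + m + 1))
          * ((m * (2 * B + m + 1 : ℝ) / (2 * ((B : ℝ) + m * (2 * B + m + 1))))
            * (1 + Real.sqrt (1 - 2 * ((B : ℝ) + m * (2 * B + m + 1))
                / (m * (2 * B + m + 1 : ℝ) ^ 2)))) ^ 2
        - 2 * m * (2 * B + m + 1 : ℝ)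
          * ((m * (2 * B + m + 1 : ℝ) / (2 * ((B : ℝ) + m * (2 * B + m + 1))))
            * (1 + Real.sqrt (1 - 2 * ((B : ℝ) + m * (2 * B + m + 1))
                / (m * (2 * B + m + 1 : ℝ) ^ 2))))
        + m = 0)
    ∧ (2 * ((B : ℝ) + m * (2 * B + m + 1))
          * ((m * (2 * B + m + 1 : ℝ) / (2 * ((B : ℝ) + m * (2 * B + m + 1))))
            * (1 - Real.sqrt (1 - 2 * ((B : ℝ) + m * (2 * B + m + 1))
                / (m * (2 * B + m + 1 : ℝ) ^ 2)))) ^ 2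
        - 2 * m * (2 * B + m + 1 : ℝ)
          * ((m * (2 * B + m + 1 : ℝ) / (2 * ((B : ℝ) + m * (2 * B + m + 1))))
            * (1 - Real.sqrt (1 - 2 * ((B : ℝ) + m * (2 * B + m + 1))
                / (m * (2 * B + m + 1 : ℝ) ^ 2))))
        + m = 0)
    ∧ 0 < (m * (2 * B + m + 1 : ℝ) / (2 * ((B : ℝ) + m * (2 * B + m + 1))))
            * (1 - Real.sqrt (1 - 2 * ((B : ℝ) + m * (2 * B + m + 1))
                / (m * (2 * B + m + 1 : ℝ) ^ 2)))
    ∧ (m * (2 * B + m + 1 : ℝ) / (2 * ((B : ℝ) + m * (2 * B + m + 1))))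
            * (1 - Real.sqrt (1 - 2 * ((B : ℝ) + m * (2 * B + m + 1))
                / (m * (2 * B + m + 1 : ℝ) ^ 2)))
        ≤ (m * (2 * B + m + 1 : ℝ) / (2 * ((B : ℝ) + m * (2 * B + m + 1))))
            * (1 + Real.sqrt (1 - 2 * ((B : ℝ) + m * (2 * B + m + 1))
                / (m * (2 * B + m + 1 : ℝ) ^ 2)))
    ∧ (m * (2 * B + m + 1 : ℝ) / (2 * ((B : ℝ) + m * (2 * B + m + 1))))
            * (1 + Real.sqrt (1 - 2 * ((B : ℝ) + m * (2 * B + m + 1))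
                / (m * (2 * B + m + 1 : ℝ) ^ 2)))
        < 1 := by
  have hm' : (1 : ℝ) ≤ m := mod_cast hm
  exact mandel_quadratic_roots_general B.cast_nonneg (by nlinarith) (by linarith)
end

section
/- For all integers B ≥ 0, m ≥ 0, every integer j with 0 ≤ j ≤ 2B+2m, and every real t with 0 < t < 1, the m-th derivative of the function t ↦ t^{j+m}·(1−t)^{2B+m−j} (integer, possibly negative, power for the second factor) satisfies (d/dt)^m [t^{j+m}(1−t)^{2B+m−j}] = ((m+j)!/j!)·t^j·(1−t)^{2B−j}·Σ_{k=0}^{m} (−1)^k·C(m,k)·((2B+m+1)_k/(j+1)_k)·t^k, where (1−t)^{2B−j} is an integer (possibly negative) power. -/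
open Finset

/-!
With `F(a, b; c; x)` for the hypergeometric series `∑ u(a, b, c; k) * x ^ k`, the classical rule
`d/dx [x ^ (c - 1) * (1 - x) ^ (a + b - c) * F(a, b; c; x)] =`
`(c - 1) * x ^ (c - 2) * (1 - x) ^ (a + b - c - 1) * F(a - 1, b - 1; c - 1; x)`
lowers all three parameters by one. The function to be differentiated is the expression in brackets
for `a = 0`, where `F = 1`, so that `m` derivatives lead to `a = -m`. After cancelling powers of `x`
and `1 - x`, the rule is an identity between power series; comparing coefficients, it follows from
the ratios `u(a, b, c; k + 1) / u(a, b, c; k)` and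
`u(a, b, c; k + 1) / u(a + 1, b + 1, c + 1; k)`.
-/

open Polynomial

section Coefficient

variable {K : Type*} [Field K]

theorem ascPochhammer_eval_succ_left (k : ℕ) (x : K) :
    (ascPochhammer K (k + 1)).eval x = x * (ascPochhammer K k).eval (x + 1) := by
  simp [ascPochhammer_succ_left]

theorem ascPochhammer_eval_eq_prod_range (k : ℕ) (x : K) :
    (ascPochhammer K k).eval x = ∏ i ∈ range k, (x + i) := by
  induction k with
  | zero => simp
  | succ k ih => rw [ascPochhammer_succ_eval, ih, prod_range_succ]

theorem ascPochhammer_eval_neg_natCast (n k : ℕ) :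
    (ascPochhammer K k).eval (-(n : K)) = (-1) ^ k * (k.factorial * n.choose k) := by
  rw [ascPochhammer_eval_neg_eq_descPochhammer, descPochhammer_eval_eq_descFactorial,
    Nat.descFactorial_eq_factorial_mul_choose, Nat.cast_mul]

theorem ordinaryHypergeometricCoefficient_neg_natCast_of_lt {n k : ℕ} (h : n < k) (b c : K) :
    ordinaryHypergeometricCoefficient (-(n : K)) b c k = 0 := by
  simp [ascPochhammer_eval_neg_coe_nat_of_lt h]

variable [CharZero K]

theorem ordinaryHypergeometricCoefficient_neg_natCast (n : ℕ) (b c : K) (k : ℕ) :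
    ordinaryHypergeometricCoefficient (-(n : K)) b c k =
      (-1) ^ k * n.choose k * ((∏ i ∈ range k, (b + i)) / ∏ i ∈ range k, (c + i)) := by
  have hk : (k.factorial : K) ≠ 0 := mod_cast k.factorial_ne_zero
  simp only [ordinaryHypergeometricCoefficient, ascPochhammer_eval_neg_natCast,
    ascPochhammer_eval_eq_prod_range k b, ascPochhammer_eval_eq_prod_range k c]
  field_simp

theorem ordinaryHypergeometricCoefficient_succ_right (a b : K) {c : K} {k : ℕ} (hc : c + k ≠ 0) :
    (k + 1) * ((c + k) * ordinaryHypergeometricCoefficient a b c (k + 1)) =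
      (a + k) * (b + k) * ordinaryHypergeometricCoefficient a b c k := by
  have hk : (k : K) + 1 ≠ 0 := k.cast_add_one_ne_zero
  simp only [ordinaryHypergeometricCoefficient, ascPochhammer_succ_eval, Nat.factorial_succ]
  push_cast
  field_simp

theorem ordinaryHypergeometricCoefficient_succ_left (a b : K) {c : K} (hc : c ≠ 0) (k : ℕ) :
    (k + 1) * (c * ordinaryHypergeometricCoefficient a b c (k + 1)) =
      a * b * ordinaryHypergeometricCoefficient (a + 1) (b + 1) (c + 1) k := by
  have hk : (k : K) + 1 ≠ 0 := k.cast_add_one_ne_zero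
  simp only [ordinaryHypergeometricCoefficient, ascPochhammer_eval_succ_left, Nat.factorial_succ]
  push_cast
  field_simp

theorem ordinaryHypergeometricCoefficient_contiguous (a b : K) {c : K} (hc : c ≠ 0) {k : ℕ}
    (hck : c + 1 + k ≠ 0) :
    c * ordinaryHypergeometricCoefficient a b c (k + 1) =
      (c + 1 + k) * ordinaryHypergeometricCoefficient (a + 1) (b + 1) (c + 1) (k + 1) -
        (a + b + 1 + k) * ordinaryHypergeometricCoefficient (a + 1) (b + 1) (c + 1) k := by
  have hk : (k : K) + 1 ≠ 0 := k.cast_add_one_ne_zero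
  apply mul_left_cancel₀ hk
  linear_combination ordinaryHypergeometricCoefficient_succ_left a b hc k -
    ordinaryHypergeometricCoefficient_succ_right (a + 1) (b + 1) hck

end Coefficient

section HypergeometricPolynomial

variable {K : Type*} [Field K]

/-- The terminating hypergeometric series `₂F₁(-n, b; c; X)` as a polynomial. Mathlib's `₂F₁` is a
function defined by an infinite sum; the polynomial makes sense over every field, without a
topology. Coefficients whose denominator `(c)_k` vanishes are `0`. -/
noncomputable def hypergeometricPolynomial (n : ℕ) (b c : K) : K[X] :=
  ∑ k ∈ range (n + 1), monomial k (ordinaryHypergeometricCoefficient (-(n : K)) b c k)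

theorem hypergeometricPolynomial_zero (b c : K) : hypergeometricPolynomial 0 b c = 1 := by
  simp [hypergeometricPolynomial]

theorem coeff_hypergeometricPolynomial (n : ℕ) (b c : K) (k : ℕ) :
    (hypergeometricPolynomial n b c).coeff k =
      ordinaryHypergeometricCoefficient (-(n : K)) b c k := by
  simp only [hypergeometricPolynomial, finsetSum_coeff, coeff_monomial, sum_ite_eq', mem_range]
  split_ifs with h
  · rfl
  · exact (ordinaryHypergeometricCoefficient_neg_natCast_of_lt (by lia) b c).symm

variable [CharZero K]

theorem eval_hypergeometricPolynomial (n : ℕ) (b c x : K) :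
    (hypergeometricPolynomial n b c).eval x =
      ∑ k ∈ range (n + 1), (-1) ^ k * n.choose k *
        ((∏ i ∈ range k, (b + i)) / ∏ i ∈ range k, (c + i)) * x ^ k := by
  simp only [hypergeometricPolynomial, eval_finsetSum, eval_monomial,
    ordinaryHypergeometricCoefficient_neg_natCast]

theorem C_mul_hypergeometricPolynomial_succ (n : ℕ) (b : K) {c : K} (hc : ∀ k : ℕ, c + k ≠ 0) :
    C c * hypergeometricPolynomial (n + 1) b c =
      (C c - C (b - n) * X) * hypergeometricPolynomial n (b + 1) (c + 1) +
        X * (1 - X) * derivative (hypergeometricPolynomial n (b + 1) (c + 1)) := by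
  have ha : -((n + 1 : ℕ) : K) + 1 = -n := by push_cast; ring
  set P := hypergeometricPolynomial n (b + 1) (c + 1)
  have hexpand : (C c - C (b - n) * X) * P + X * (1 - X) * derivative P =
      C c * P + X * (derivative P - C (b - n) * P - X * derivative P) := by ring
  rw [hexpand]
  ext (_ | k)
  · simp [P, coeff_hypergeometricPolynomial, ordinaryHypergeometricCoefficient]
  · have hcontig := ordinaryHypergeometricCoefficient_contiguous (-((n + 1 : ℕ) : K)) b
      (by simpa using hc 0) (k := k) (by simpa [add_assoc, add_comm (k : K)] using hc (k + 1))
    rw [ha, ← coeff_hypergeometricPolynomial, ← coeff_hypergeometricPolynomial,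
      ← coeff_hypergeometricPolynomial] at hcontig
    have hXderiv : (X * derivative P).coeff k = k * P.coeff k := by
      cases k <;> simp [coeff_derivative, mul_comm]
    simp only [coeff_add, coeff_sub, coeff_C_mul, coeff_X_mul, coeff_derivative, hXderiv, hcontig]
    push_cast
    ring

end HypergeometricPolynomial

section Rodrigues

variable {𝕜 : Type*} [NontriviallyNormedField 𝕜]

theorem hasDerivAt_one_sub_zpow (q : ℤ) {x : 𝕜} (hx : x ≠ 1) :
    HasDerivAt (fun y : 𝕜 => (1 - y) ^ q) (-(q * (1 - x) ^ (q - 1))) x := by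
  simpa [Function.comp_def] using
    (hasDerivAt_zpow q (1 - x) (.inl (sub_ne_zero.mpr hx.symm))).comp x
      ((hasDerivAt_id x).const_sub 1)

variable [CharZero 𝕜]

theorem hasDerivAt_pow_mul_one_sub_zpow_mul_hypergeometricPolynomial (n a : ℕ) (q : ℤ) {x : 𝕜}
    (hx : x ≠ 1) :
    HasDerivAt
      (fun y : 𝕜 => y ^ (a + 1) * (1 - y) ^ (q + 1) *
        (hypergeometricPolynomial n (a + q + n + 3 : 𝕜) (a + 2)).eval y)
      ((a + 1) * (x ^ a * (1 - x) ^ q *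
        (hypergeometricPolynomial (n + 1) (a + q + n + 2 : 𝕜) (a + 1)).eval x)) x := by
  have hx' : 1 - x ≠ 0 := sub_ne_zero.mpr hx.symm
  have hc (k : ℕ) : (a + 1 : 𝕜) + k ≠ 0 := by
    exact_mod_cast (show a + 1 + k ≠ 0 by lia)
  have hrec := congr_arg (eval x) (C_mul_hypergeometricPolynomial_succ n (a + q + n + 2 : 𝕜) hc)
  rw [show (a + q + n + 2 : 𝕜) + 1 = a + q + n + 3 by ring,
    show (a + 1 : 𝕜) + 1 = a + 2 by ring] at hrec
  simp only [eval_add, eval_sub, eval_mul, eval_C, eval_X, eval_one] at hrec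
  refine (((hasDerivAt_pow (a + 1) x).fun_mul (hasDerivAt_one_sub_zpow (q + 1) hx)).fun_mul
    (Polynomial.hasDerivAt _ x)).congr_deriv ?_
  rw [zpow_add_one₀ hx', Nat.add_sub_cancel, add_sub_cancel_right]
  push_cast
  linear_combination -(x ^ a * (1 - x) ^ q) * hrec

theorem iteratedDeriv_pow_mul_one_sub_zpow (n a : ℕ) (q : ℤ) {x : 𝕜} (hx : x ≠ 1) :
    iteratedDeriv n (fun y : 𝕜 => y ^ (a + n) * (1 - y) ^ (q + n)) x =
      (n + a).factorial / a.factorial * (x ^ a * (1 - x) ^ q *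
        (hypergeometricPolynomial n (a + q + n + 1 : 𝕜) (a + 1)).eval x) := by
  induction n generalizing a q x with
  | zero =>
    have ha : (a.factorial : 𝕜) ≠ 0 := mod_cast a.factorial_ne_zero
    simp [hypergeometricPolynomial_zero, ha]
  | succ n ih =>
    have ha : (a.factorial : 𝕜) ≠ 0 := mod_cast a.factorial_ne_zero
    have ha' : (a : 𝕜) + 1 ≠ 0 := a.cast_add_one_ne_zero
    have hfun : (fun y : 𝕜 => y ^ (a + (n + 1)) * (1 - y) ^ (q + (n + 1 : ℕ))) =
        fun y => y ^ (a + 1 + n) * (1 - y) ^ (q + 1 + n) := by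
      funext y
      congr 2 <;> push_cast <;> ring
    have hb : ((a + 1 : ℕ) : 𝕜) + (q + 1 : ℤ) + n + 1 = a + q + n + 3 := by push_cast; ring
    have hc : ((a + 1 : ℕ) : 𝕜) + 1 = a + 2 := by push_cast; ring
    have hih : iteratedDeriv n (fun y : 𝕜 => y ^ (a + 1 + n) * (1 - y) ^ (q + 1 + n)) =ᶠ[nhds x]
        fun y => (n + (a + 1)).factorial / (a + 1).factorial * (y ^ (a + 1) * (1 - y) ^ (q + 1) *
          (hypergeometricPolynomial n (a + q + n + 3 : 𝕜) (a + 2)).eval y) := by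
      filter_upwards [isOpen_ne.mem_nhds hx] with y hy
      rw [ih (a + 1) (q + 1) hy, hb, hc]
    have hfact : ((n + (a + 1)).factorial : 𝕜) / (a + 1).factorial * (a + 1) =
        (n + 1 + a).factorial / a.factorial := by
      rw [Nat.factorial_succ a, show n + (a + 1) = n + 1 + a by ring]
      push_cast
      field_simp
    have hb' : (a : 𝕜) + q + (n + 1 : ℕ) + 1 = a + q + n + 2 := by push_cast; ring
    rw [hfun, iteratedDeriv_succ, hih.deriv_eq, deriv_const_mul_field,
      (hasDerivAt_pow_mul_one_sub_zpow_mul_hypergeometricPolynomial n a q hx).deriv,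
      ← mul_assoc, hfact, hb']

theorem iteratedDeriv_hypergeom_general (N : ℤ) (m j : ℕ) {t : 𝕜} (ht : t ≠ 1) :
    iteratedDeriv m (fun s : 𝕜 => s ^ (j + m) * (1 - s) ^ (N + m - j)) t =
      (m + j).factorial / j.factorial * t ^ j * (1 - t) ^ (N - j) *
        ∑ k ∈ range (m + 1), (-1) ^ k * m.choose k *
          ((∏ i ∈ range k, ((N + m + 1 : 𝕜) + i)) / ∏ i ∈ range k, ((j + 1 : 𝕜) + i)) * t ^ k := by
  have hexp : N + m - j = N - j + m := by ring
  have hb : (j : 𝕜) + (N - j : ℤ) + m + 1 = N + m + 1 := by push_cast; ring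
  rw [hexp, iteratedDeriv_pow_mul_one_sub_zpow m j (N - j) ht, hb, eval_hypergeometricPolynomial]
  ring

end Rodrigues

/-- Jacobi's formula in hypergeometric form: for `0 ≤ j ≤ 2B+2m` and `0 < t < 1`,
`(d/dt)^m [t^{j+m}(1−t)^{2B+m−j}]
  = ((m+j)!/j!) t^j (1−t)^{2B−j} ∑_{k=0}^{m} (−1)^k C(m,k) ((2B+m+1)_k/(j+1)_k) t^k`,
where `(a)_k` is the rising factorial and the powers of `1−t` are integer powers. -/
theorem iteratedDeriv_hypergeom (B m j : ℕ) (hj : j ≤ 2 * B + 2 * m) (t : ℝ)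
    (h0 : 0 < t) (h1 : t < 1) :
    iteratedDeriv m (fun s : ℝ => s ^ (j + m) * (1 - s) ^ ((2 * B + m : ℤ) - (j : ℤ))) t
      = ((m + j).factorial : ℝ) / (j.factorial : ℝ) * t ^ j * (1 - t) ^ ((2 * B : ℤ) - (j : ℤ))
        * ∑ k ∈ Finset.range (m + 1),
            (-1 : ℝ) ^ k * (m.choose k : ℝ)
              * ((∏ i ∈ Finset.range k, ((2 * B + m + 1 : ℝ) + i))
                  / (∏ i ∈ Finset.range k, ((j : ℝ) + 1 + i)))
              * t ^ k := by
  simpa using iteratedDeriv_hypergeom_general (2 * B) m j h1.ne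
end
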